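/- Define, for every subset S ⊆ V, the rank r(S) to be the maximum over all feasible b-matchings f of G of Σ_{i ∈ S} x_i(f). Then r is submodular: for all S, T ⊆ V, r(S ∪ T) + r(S ∩ T) ≤ r(S) + r(T). -/

import Mathlib

variable {V : Type*} [Fintype V] [DecidableEq V]

/-- The utility of vertex `i` under the b-matching `f`: the total weight of edges incident to `i`. -/
def bmUtil (G : SimpleGraph V) [DecidableRel G.Adj] (f : Sym2 V → ℕ) (i : V) : ℕ :=
  ∑ e ∈ G.edgeFinset.filter (fun e => i ∈ e), f e

/-- `f` is a feasible b-matching for `(G, b)`. -/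
def BMFeasible (G : SimpleGraph V) [DecidableRel G.Adj] (b : V → ℕ) (f : Sym2 V → ℕ) : Prop :=
  ∀ i, bmUtil G f i ≤ b i

/-- The size of a b-matching: the total weight over all edges. -/
def bmSize (G : SimpleGraph V) [DecidableRel G.Adj] (f : Sym2 V → ℕ) : ℕ :=
  ∑ e ∈ G.edgeFinset, f e

/-- `f` is a maximum b-matching for `(G, b)`. -/
def IsMaxBM (G : SimpleGraph V) [DecidableRel G.Adj] (b : V → ℕ) (f : Sym2 V → ℕ) : Prop :=
  BMFeasible G b f ∧ ∀ g, BMFeasible G b g → bmSize G g ≤ bmSize G f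

/-- Underdemanded vertices: unsaturated in at least one maximum b-matching. -/
def VU (G : SimpleGraph V) [DecidableRel G.Adj] (b : V → ℕ) : Set V :=
  {i | ∃ f, IsMaxBM G b f ∧ bmUtil G f i < b i}

/-- Overdemanded vertices: not underdemanded, with at least one underdemanded neighbor. -/
def VO (G : SimpleGraph V) [DecidableRel G.Adj] (b : V → ℕ) : Set V :=
  {i | i ∉ VU G b ∧ ∃ j ∈ VU G b, G.Adj i j}

/-- Perfectly demanded vertices. -/
def VP (G : SimpleGraph V) [DecidableRel G.Adj] (b : V → ℕ) : Set V :=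
  {i | i ∉ VU G b ∧ i ∉ VO G b}

/-!
If `f` and `g` are feasible b-matchings, `v` lies in `B` and `x_v(f) < x_v(g)`, raise `f` by one on
an edge `vu` where `f < g`. Should this violate the capacity of `u`, then `f` now exceeds `g` on
some edge `uw`, and lowering `f` by one there restores feasibility. Either way the total utility on
`B` does not drop, since `v ∈ B` gains one unit before at most one vertex loses one, while `f ⊓ g`
strictly increases. So a feasible `h` with `h ⊓ g` maximal among those with at least the total
utility of `f` on `B` has utility at least that of `g` at every vertex of `B`. For `f` optimal on
`B = S ∪ T` and `g` optimal on `S ∩ T`, this `h` is optimal on both, and its total utility is a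
modular function of the vertex set.
-/

theorem add_single_one_le_of_lt {ι α : Type*} [DecidableEq ι] [AddMonoidWithOne α] [Preorder α]
    [SuccAddOrder α] {x y : ι → α} {i : ι} (hxy : x ≤ y) (hi : x i < y i) :
    x + Pi.single i 1 ≤ y := by
  intro j
  obtain rfl | hji := eq_or_ne j i
  · simpa using Order.add_one_le_of_lt hi
  · simpa [hji] using hxy j

theorem inf_lt_add_single_one_inf {ι α : Type*} [DecidableEq ι] [Semiring α] [LinearOrder α]
    [IsStrictOrderedRing α] [SuccAddOrder α] {f g : ι → α} {i : ι} (hi : f i < g i) :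
    f ⊓ g < (f + Pi.single i 1) ⊓ g :=
  calc f ⊓ g < f ⊓ g + Pi.single i 1 := lt_add_of_pos_right _ (Pi.single_pos.2 one_pos)
    _ ≤ (f + Pi.single i 1) ⊓ g :=
      le_inf (by gcongr; exact inf_le_left)
        (add_single_one_le_of_lt inf_le_right (inf_lt_right.2 hi.not_ge))

section Utility

variable {G : SimpleGraph V} [DecidableRel G.Adj]

theorem bmUtil_add (f g : Sym2 V → ℕ) : bmUtil G (f + g) = bmUtil G f + bmUtil G g :=
  funext fun _ => Finset.sum_add_distrib

theorem bmUtil_single_one {u v : V} (h : G.Adj u v) :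
    bmUtil G (Pi.single s(u, v) 1) = Pi.single u 1 + Pi.single v 1 := by
  have := h.ne
  ext i
  simp only [bmUtil, Finset.sum_ite_eq', Finset.mem_filter, SimpleGraph.mem_edgeFinset,
    SimpleGraph.mem_edgeSet, h, true_and, Sym2.mem_iff, Pi.add_apply, Pi.single_apply]
  grind

theorem exists_adj_lt_of_bmUtil_lt {f g : Sym2 V → ℕ} {v : V} (h : bmUtil G f v < bmUtil G g v) :
    ∃ u, G.Adj v u ∧ f s(v, u) < g s(v, u) := by
  obtain ⟨e, he, hlt⟩ := Finset.exists_lt_of_sum_lt h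
  obtain ⟨hadj, u, rfl⟩ : e ∈ G.edgeSet ∧ v ∈ e := by simpa using he
  exact ⟨u, hadj, hlt⟩

theorem exists_inf_le_bmUtil_add_single_eq_of_lt {f g : Sym2 V → ℕ} {u : V}
    (h : bmUtil G g u < bmUtil G f u) :
    ∃ f' w, f ⊓ g ≤ f' ∧ bmUtil G f' + Pi.single w 1 + Pi.single u 1 = bmUtil G f := by
  obtain ⟨w, huw, hlt⟩ := exists_adj_lt_of_bmUtil_lt h
  have hle : f ⊓ g + Pi.single s(u, w) 1 ≤ f :=
    add_single_one_le_of_lt inf_le_left (inf_lt_left.2 hlt.not_ge)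
  refine ⟨f - Pi.single s(u, w) 1, w, le_tsub_of_add_le_right hle, ?_⟩
  rw [add_assoc, add_comm (Pi.single w 1), ← bmUtil_single_one huw, ← bmUtil_add,
    tsub_add_cancel_of_le (le_of_add_le_right hle)]

end Utility

namespace BMFeasible

variable {G : SimpleGraph V} [DecidableRel G.Adj] {b : V → ℕ} {f g : Sym2 V → ℕ}

theorem exists_inf_lt_of_bmUtil_lt (hf : BMFeasible G b f) (hg : BMFeasible G b g) {v : V}
    (hv : bmUtil G f v < bmUtil G g v) :
    ∃ f', BMFeasible G b f' ∧ f ⊓ g < f' ⊓ g ∧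
      ∃ w, bmUtil G f + Pi.single v 1 ≤ bmUtil G f' + Pi.single w 1 := by
  obtain ⟨u, hvu, hlt⟩ := exists_adj_lt_of_bmUtil_lt hv
  set f₁ := f + Pi.single s(v, u) 1 with hf₁
  have hinf : f ⊓ g < f₁ ⊓ g := inf_lt_add_single_one_inf hlt
  have hutil : bmUtil G f₁ = bmUtil G f + Pi.single v 1 + Pi.single u 1 := by
    rw [hf₁, bmUtil_add, bmUtil_single_one hvu, add_assoc]
  have hle : bmUtil G f + Pi.single v 1 ≤ b := add_single_one_le_of_lt hf (hv.trans_le (hg v))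
  by_cases hu : (bmUtil G f + Pi.single v 1 : V → ℕ) u < b u
  · have hfeas : bmUtil G f₁ ≤ b := hutil ▸ add_single_one_le_of_lt hle hu
    exact ⟨f₁, hfeas, hinf, u, hutil ▸ le_self_add.trans le_self_add⟩
  · have hgu : bmUtil G g u < bmUtil G f₁ u := by
      rw [hutil, Pi.add_apply, Pi.single_eq_same, Nat.lt_succ_iff]
      exact (hg u).trans (not_lt.1 hu)
    obtain ⟨f₂, w, hf₂, hutil₂⟩ := exists_inf_le_bmUtil_add_single_eq_of_lt hgu
    have hmove : bmUtil G f₂ + Pi.single w 1 = bmUtil G f + Pi.single v 1 :=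
      add_right_cancel (hutil₂.trans hutil)
    have hfeas : bmUtil G f₂ ≤ b := le_self_add.trans (hmove.trans_le hle)
    exact ⟨f₂, hfeas, hinf.trans_le (le_inf hf₂ inf_le_right), w, hmove.ge⟩

theorem exists_sum_le_and_forall_bmUtil_le (hf : BMFeasible G b f) (hg : BMFeasible G b g)
    (B : Finset V) :
    ∃ h, BMFeasible G b h ∧ ∑ i ∈ B, bmUtil G f i ≤ ∑ i ∈ B, bmUtil G h i ∧
      ∀ v ∈ B, bmUtil G g v ≤ bmUtil G h v := by
  let C : Set (Sym2 V → ℕ) :=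
    {h | BMFeasible G b h ∧ ∑ i ∈ B, bmUtil G f i ≤ ∑ i ∈ B, bmUtil G h i}
  have hfin : ((· ⊓ g) '' C).Finite :=
    (Set.finite_Iic g).subset (Set.image_subset_iff.2 fun h _ => (inf_le_right : h ⊓ g ≤ g))
  obtain ⟨h, ⟨hh, hsum⟩, hmax⟩ := hfin.exists_maximalFor' (· ⊓ g) C ⟨f, hf, le_rfl⟩
  refine ⟨h, hh, hsum, fun v hvB => le_of_not_gt fun hv => ?_⟩
  obtain ⟨h', hh', hlt, w, hw⟩ := hh.exists_inf_lt_of_bmUtil_lt hg hv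
  have hsum' : ∑ i ∈ B, bmUtil G h i ≤ ∑ i ∈ B, bmUtil G h' i := by
    have hle := Finset.sum_le_sum fun i (_ : i ∈ B) => hw i
    simp only [Pi.add_apply, Finset.sum_add_distrib, Finset.sum_pi_single', hvB, if_true] at hle
    split_ifs at hle <;> omega
  exact hlt.not_ge (hmax ⟨hh', hsum.trans hsum'⟩ hlt.le)

end BMFeasible

/-- the rank function `r S = max_f ∑_{i ∈ S} x_i(f)` over feasible b-matchings
is submodular. -/
theorem stmt_15 (G : SimpleGraph V) [DecidableRel G.Adj] (b : V → ℕ)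
    (r : Finset V → ℕ)
    (hr : ∀ S : Finset V,
      IsGreatest {t : ℕ | ∃ f : Sym2 V → ℕ, BMFeasible G b f ∧ t = ∑ i ∈ S, bmUtil G f i} (r S)) :
    ∀ S T : Finset V, r (S ∪ T) + r (S ∩ T) ≤ r S + r T := by
  intro S T
  obtain ⟨f, hf, hrf⟩ := (hr (S ∪ T)).1
  obtain ⟨g, hg, hrg⟩ := (hr (S ∩ T)).1
  obtain ⟨h, hh, hunion, hge⟩ := hf.exists_sum_le_and_forall_bmUtil_le hg (S ∪ T)
  have hinter : ∑ i ∈ S ∩ T, bmUtil G g i ≤ ∑ i ∈ S ∩ T, bmUtil G h i :=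
    Finset.sum_le_sum fun i hi => hge i (Finset.inter_subset_union hi)
  calc r (S ∪ T) + r (S ∩ T)
      ≤ ∑ i ∈ S ∪ T, bmUtil G h i + ∑ i ∈ S ∩ T, bmUtil G h i := by
        rw [hrf, hrg]; exact add_le_add hunion hinter
    _ = ∑ i ∈ S, bmUtil G h i + ∑ i ∈ T, bmUtil G h i := Finset.sum_union_inter
    _ ≤ r S + r T := add_le_add ((hr S).2 ⟨h, hh, rfl⟩) ((hr T).2 ⟨h, hh, rfl⟩)
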